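/- If w ∈ Max is eventually periodic (i.e. there exist m ≥ 0 and p ≥ 1 with w_{r+p} = w_r for all r ≥ m), then DF(w) is the convex hull of a finite subset of ℚ³ (a polygon with rational vertices). -/

import Mathlib

open Filter Topology MeasureTheory

/-- The sequence space `Σ⁺ = {0,1,2}^ℕ` (with the product topology). -/
abbrev Seq3 := ℕ → Fin 3

/-- The shift map `σ`. -/
def shift (s : Seq3) : Seq3 := fun n => s (n + 1)

/-- The observable `κ(s) = e_{s₀}`. -/
noncomputable def kappa (s : Seq3) : Fin 3 → ℝ := fun i => if i = s 0 then 1 else 0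

/-- The cocycle `κ_σ(s,r) = Σ_{i<r} κ(σⁱ s)`. -/
noncomputable def birk (s : Seq3) (r : ℕ) : Fin 3 → ℝ :=
  ∑ i ∈ Finset.range r, kappa (shift^[i] s)

/-- The Birkhoff digit frequency of `s` exists and equals `v`. -/
def hasFreq (s : Seq3) (v : Fin 3 → ℝ) : Prop :=
  Tendsto (fun r : ℕ => (r : ℝ)⁻¹ • birk s r) atTop (nhds v)

/-- The lexicographic order on `Σ⁺`. -/
def lexLe (s t : Seq3) : Prop :=
  s = t ∨ ∃ n, (∀ i, i < n → s i = t i) ∧ s n < t n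

/-- The set `Max` of maximal sequences. -/
def MaxSet : Set Seq3 := {w | w 0 = 2 ∧ ∀ r : ℕ, lexLe (shift^[r] w) w}

/-- The symbolic β-shift `B(w)`. -/
def BetaShift (w : Seq3) : Set Seq3 := {s | ∀ r : ℕ, lexLe (shift^[r] s) w}

/-- The digit frequency set `DF(w)`. -/
def DF (w : Seq3) : Set (Fin 3 → ℝ) := {v | ∃ s ∈ BetaShift w, hasFreq s v}

/-- The Misiurewicz–Ziemian digit frequency set `DF_MZ(X)` of a subset `X ⊆ Σ⁺`. -/
def DFMZ (X : Set Seq3) : Set (Fin 3 → ℝ) :=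
  {v | ∃ (s : ℕ → Seq3) (r : ℕ → ℕ), (∀ i, s i ∈ X) ∧ Tendsto r atTop atTop ∧
    Tendsto (fun i => (r i : ℝ)⁻¹ • birk (s i) (r i)) atTop (nhds v)}

/-- The standard 2-simplex `Δ ⊆ ℝ³`. -/
def Delta : Set (Fin 3 → ℝ) := {α | (∀ i, 0 ≤ α i) ∧ α 0 + α 1 + α 2 = 1}

/-- `Δ' = {α ∈ Δ : α₂ > 0}`. -/
def Delta' : Set (Fin 3 → ℝ) := {α | α ∈ Delta ∧ 0 < α 2}

/-- `I` is the infimax sequence of `α`: the infimum, in the lexicographic order, of the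
(nonempty) set of maximal sequences with digit frequency `α`; it belongs to `Max`. -/
def IsInfimax (α : Fin 3 → ℝ) (I : Seq3) : Prop :=
  {w | w ∈ MaxSet ∧ hasFreq w α}.Nonempty ∧ I ∈ MaxSet ∧
    (∀ w, w ∈ MaxSet ∧ hasFreq w α → lexLe I w) ∧
    (∀ b : Seq3, (∀ w, w ∈ MaxSet ∧ hasFreq w α → lexLe b w) → lexLe b I)

/-- The closure of the forward `σ`-orbit of `s` (e.g. `C_α` is `orbitClosure I(α)`). -/
def orbitClosure (s : Seq3) : Set Seq3 := closure {t | ∃ r : ℕ, shift^[r] s = t}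

/-- A vector in `ℝ³` is rational if all its coordinates are. -/
def IsRat (v : Fin 3 → ℝ) : Prop := ∀ i, ∃ q : ℚ, v i = (q : ℝ)

/-- A minimal set of a continuous map: a nonempty compact invariant set in which every
point has dense forward orbit. -/
def IsMinimalSet {X : Type*} [TopologicalSpace X] (f : X → X) (C : Set X) : Prop :=
  C.Nonempty ∧ IsCompact C ∧ Set.MapsTo f C C ∧
    ∀ x ∈ C, C ⊆ closure {y | ∃ n : ℕ, f^[n] x = y}

/-!
Call a finite word free for `w` if each of its nonempty suffixes drops strictly below `w` inside the
word. Free words can be concatenated at will without leaving `B(w)`, and if `w₀ ≠ 0` then every word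
occurring in `B(w)` becomes free after changing at most one digit. Hence frequencies realised in
`B(w)` can be mixed in any proportion by concatenating longer and longer free words, and `DF w` is
convex.

Conversely, reading `s ∈ B(w)` from left to right cuts it into words `w₀ ⋯ w_{k-1} d` with `d < w_k`
and at most one infinite tail of `w`. If `w` is eventually periodic, only finitely many of these
words are needed up to adding or removing periods of `w`, so a linear functional on `DF w` is
bounded by its values at the frequencies of those words and of the period. These are rational, and
they lie in `DF w` because the corresponding periodic sequences lie in `B(w)`.
-/

open Asymptotics

/-! ### Averages -/

theorem nonpos_of_tendsto_of_natCast_mul_le {x : ℕ → ℝ} {l C : ℝ} (hx : Tendsto x atTop (𝓝 l))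
    (hC : ∀ n : ℕ, n * x n ≤ C) : l ≤ 0 := by
  refine le_of_tendsto_of_tendsto hx (tendsto_const_div_atTop_nhds_zero_nat C) ?_
  filter_upwards [eventually_gt_atTop 0] with n hn
  exact (le_div_iff₀' (Nat.cast_pos.mpr hn)).mpr (hC n)

theorem natFloor_mul_add_natFloor_mul_le {a b : ℝ} (ha : 0 ≤ a) (hb : 0 ≤ b) (hab : a + b ≤ 1)
    (n : ℕ) : ⌊a * n⌋₊ + ⌊b * n⌋₊ ≤ n := by
  have hsum : (⌊a * n⌋₊ + ⌊b * n⌋₊ : ℝ) ≤ n := calc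
    (⌊a * n⌋₊ + ⌊b * n⌋₊ : ℝ) ≤ a * n + b * n :=
      add_le_add (Nat.floor_le (by positivity)) (Nat.floor_le (by positivity))
    _ = (a + b) * n := (add_mul a b n).symm
    _ ≤ n := mul_le_of_le_one_left n.cast_nonneg hab
  exact_mod_cast hsum

section Averages

variable {E : Type*} [SeminormedAddCommGroup E]

theorem isLittleO_of_isLittleO_sq {D : ℕ → E} {C : ℝ} (hstep : ∀ n, dist (D n) (D (n + 1)) ≤ C)
    (hsq : (fun j => D (j ^ 2)) =o[atTop] (fun j : ℕ => (j : ℝ) ^ 2)) :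
    D =o[atTop] (fun n : ℕ => (n : ℝ)) := by
  have hsqrt : Tendsto Nat.sqrt atTop atTop :=
    tendsto_atTop_atTop.mpr fun b => ⟨b ^ 2, fun _ => Nat.le_sqrt'.mpr⟩
  have hsqrt_sq_le : (fun n : ℕ => (n.sqrt : ℝ) ^ 2) =O[atTop] (fun n : ℕ => (n : ℝ)) :=
    IsBigO.of_norm_le fun n => by
      rw [Real.norm_of_nonneg (by positivity)]
      exact_mod_cast Nat.sqrt_le' n
  have hgap : (fun n => D n - D (n.sqrt ^ 2)) =O[atTop] (fun n : ℕ => (n.sqrt : ℝ)) := by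
    refine IsBigO.of_bound (2 * C) (Eventually.of_forall fun n => ?_)
    have hC : 0 ≤ C := dist_nonneg.trans (hstep 0)
    have hlen : ((n - n.sqrt ^ 2 : ℕ) : ℝ) ≤ 2 * n.sqrt := by
      have := Nat.sqrt_le_add n
      exact_mod_cast (by lia : n - n.sqrt ^ 2 ≤ 2 * n.sqrt)
    calc ‖D n - D (n.sqrt ^ 2)‖ = dist (D (n.sqrt ^ 2)) (D n) := by rw [dist_comm, dist_eq_norm]
      _ ≤ ∑ _i ∈ Finset.Ico (n.sqrt ^ 2) n, C :=
        dist_le_Ico_sum_of_dist_le (Nat.sqrt_le' n) fun _ _ => hstep _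
      _ = (n - n.sqrt ^ 2 : ℕ) * C := by simp
      _ ≤ 2 * n.sqrt * C := by gcongr
      _ = 2 * C * ‖(n.sqrt : ℝ)‖ := by rw [Real.norm_natCast]; ring
  have hlin : (fun j : ℕ => (j : ℝ)) =o[atTop] (fun j : ℕ => (j : ℝ) ^ 2) := by
    simpa [Function.comp_def] using
      (isLittleO_pow_pow_atTop_of_lt (𝕜 := ℝ) one_lt_two).comp_tendsto
        tendsto_natCast_atTop_atTop
  simpa using ((hsq.comp_tendsto hsqrt).add (hgap.trans_isLittleO (hlin.comp_tendsto hsqrt))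
    ).trans_isBigO hsqrt_sq_le

theorem isBigO_one_of_periodic {u : ℕ → E} {p : ℕ} (hu : Function.Periodic u p) (hp : 0 < p) :
    u =O[atTop] (fun _ => (1 : ℝ)) := by
  refine IsBigO.of_bound (∑ i ∈ Finset.range p, ‖u i‖) (Eventually.of_forall fun n => ?_)
  rw [norm_one, mul_one, ← hu.map_mod_nat n]
  exact Finset.single_le_sum (f := fun i => ‖u i‖) (fun _ _ => norm_nonneg _)
    (Finset.mem_range.mpr (Nat.mod_lt n hp))

variable [NormedSpace ℝ E]

theorem tendsto_inv_smul_iff_isLittleO {u : ℕ → E} {v : E} :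
    Tendsto (fun n : ℕ => (n : ℝ)⁻¹ • u n) atTop (𝓝 v) ↔
      (fun n : ℕ => u n - (n : ℝ) • v) =o[atTop] (fun n : ℕ => (n : ℝ)) := by
  have heq : (fun n : ℕ => ‖(n : ℝ)⁻¹ • u n - v‖) =ᶠ[atTop]
      fun n : ℕ => ‖u n - (n : ℝ) • v‖ / ‖(n : ℝ)‖ := by
    filter_upwards [eventually_ne_atTop 0] with n hn
    have hn' : (n : ℝ) ≠ 0 := Nat.cast_ne_zero.mpr hn
    rw [div_eq_inv_mul, ← norm_inv, ← norm_smul, smul_sub, inv_smul_smul₀ hn']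
  rw [tendsto_iff_norm_sub_tendsto_zero, tendsto_congr' heq, ← isLittleO_norm_norm,
    isLittleO_iff_tendsto']
  filter_upwards [eventually_ne_atTop 0] with n hn h
  simp [hn] at h

theorem tendsto_birkhoffAverage_of_isPeriodicPt {α : Type*} {f : α → α} {x : α} {p : ℕ}
    (hx : Function.IsPeriodicPt f p x) (hp : 0 < p) (g : α → E) :
    Tendsto (fun n => birkhoffAverage ℝ f g n x) atTop (𝓝 (birkhoffAverage ℝ f g p x)) := by
  have hperiodic : Function.Periodic
      (fun n : ℕ => birkhoffSum f g n x - (n : ℝ) • birkhoffAverage ℝ f g p x) p := fun n => by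
    have hmean : (p : ℝ) • birkhoffAverage ℝ f g p x = birkhoffSum f g p x :=
      smul_inv_smul₀ (by positivity) _
    simp only [add_comm n p, birkhoffSum_add, hx.eq, Nat.cast_add, add_smul, hmean]
    abel
  have hone : (fun _ : ℕ => (1 : ℝ)) =o[atTop] (fun n : ℕ => (n : ℝ)) :=
    (isLittleO_const_id_atTop (1 : ℝ)).comp_tendsto tendsto_natCast_atTop_atTop
  exact tendsto_inv_smul_iff_isLittleO.mpr
    ((isBigO_one_of_periodic hperiodic hp).trans_isLittleO hone)

end Averages

/-! ### Digit counts -/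

theorem iterate_shift_apply (s : Seq3) (n i : ℕ) : shift^[n] s i = s (n + i) := by
  induction n generalizing s with
  | zero => simp
  | succ n ih =>
    rw [Function.iterate_succ_apply, ih, shift]
    congr 1
    lia

theorem iterate_shift_mem_betaShift {w s : Seq3} (hs : s ∈ BetaShift w) (n : ℕ) :
    shift^[n] s ∈ BetaShift w := fun r => by
  rw [← Function.iterate_add_apply]
  exact hs (r + n)

theorem birk_eq_sum_single (s : Seq3) (n : ℕ) :
    birk s n = ∑ i ∈ Finset.range n, Pi.single (s i) 1 :=
  Finset.sum_congr rfl fun i _ => by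
    ext d
    simp [kappa, iterate_shift_apply, Pi.single_apply]

theorem birk_succ (s : Seq3) (n : ℕ) : birk s (n + 1) = birk s n + Pi.single (s n) 1 := by
  rw [birk_eq_sum_single, birk_eq_sum_single, Finset.sum_range_succ]

theorem birk_add (s : Seq3) (m n : ℕ) : birk s (m + n) = birk s m + birk (shift^[m] s) n :=
  birkhoffSum_add shift kappa m n s

theorem birk_congr {s t : Seq3} {n : ℕ} (h : ∀ i < n, s i = t i) : birk s n = birk t n := by
  simp only [birk_eq_sum_single]
  exact Finset.sum_congr rfl fun i hi => by rw [h i (Finset.mem_range.mp hi)]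

/-- The vector of digit frequencies of the word `s₀ ⋯ s_{n-1}`; it is `0` for `n = 0`. -/
noncomputable def prefixFreq (s : Seq3) (n : ℕ) : Fin 3 → ℝ := (n : ℝ)⁻¹ • birk s n

theorem natCast_smul_prefixFreq (s : Seq3) (n : ℕ) : (n : ℝ) • prefixFreq s n = birk s n := by
  rcases eq_or_ne n 0 with rfl | hn
  · simp [birk]
  · exact smul_inv_smul₀ (Nat.cast_ne_zero.mpr hn) _

theorem isRat_prefixFreq (s : Seq3) (n : ℕ) : IsRat (prefixFreq s n) := fun d =>
  ⟨(n : ℚ)⁻¹ * ∑ i ∈ Finset.range n, if d = s i then 1 else 0, by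
    simp [prefixFreq, birk_eq_sum_single, Pi.single_apply]⟩

theorem hasFreq_of_isPeriodicPt {s : Seq3} {p : ℕ} (hs : Function.IsPeriodicPt shift p s)
    (hp : 0 < p) : hasFreq s (prefixFreq s p) :=
  tendsto_birkhoffAverage_of_isPeriodicPt hs hp kappa

/-- The sequence `s₀ ⋯ s_{n-1} t₀ t₁ ⋯`. -/
def splice (n : ℕ) (s t : Seq3) : Seq3 := fun i => if i < n then s i else t (i - n)

theorem splice_apply_of_lt {n i : ℕ} (hi : i < n) (s t : Seq3) : splice n s t i = s i :=
  if_pos hi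

theorem splice_apply_add (n i : ℕ) (s t : Seq3) : splice n s t (n + i) = t i := by
  simp [splice]

theorem birk_splice (s t : Seq3) (m n : ℕ) :
    birk (splice m s t) (m + n) = birk s m + birk t n := by
  rw [birk_add, birk_congr fun i hi => splice_apply_of_lt hi s t]
  congr 1
  exact birk_congr fun i _ => by rw [iterate_shift_apply, splice_apply_add]

theorem prefixFreq_splice (s t : Seq3) (m n : ℕ) :
    prefixFreq (splice m s t) (m + n) =
      ((m : ℝ) / (m + n : ℕ)) • prefixFreq s m + ((n : ℝ) / (m + n : ℕ)) • prefixFreq t n := by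
  rw [prefixFreq, birk_splice, ← natCast_smul_prefixFreq s, ← natCast_smul_prefixFreq t]
  simp only [smul_add, smul_smul, div_eq_inv_mul]

/-! ### Freely concatenable words -/

theorem apply_add_le_of_mem_betaShift {w s : Seq3} (hs : s ∈ BetaShift w) {a k : ℕ}
    (hmatch : ∀ i < k, s (a + i) = w i) : s (a + k) ≤ w k := by
  rcases hs a with heq | ⟨n, heq, hlt⟩
  · exact (iterate_shift_apply s a k ▸ congrFun heq k).le
  · simp only [iterate_shift_apply] at heq hlt
    rcases lt_trichotomy n k with hn | rfl | hn
    · exact absurd (hmatch n hn) hlt.ne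
    · exact hlt.le
    · exact (heq k hn).le

/-- The word `s₀ ⋯ s_{n-1}` is free for `w` if each of its nonempty suffixes first differs from
`w` at a smaller digit, inside the word. Whether a sequence extending the word is admissible for
`w` is then independent of the continuation, so free words can be concatenated at will. -/
def IsFreePrefix (w : Seq3) (n : ℕ) (s : Seq3) : Prop :=
  ∀ a < n, ∃ k, a + k < n ∧ (∀ i < k, s (a + i) = w i) ∧ s (a + k) < w k

theorem isFreePrefix_congr {w s t : Seq3} {n : ℕ} (h : ∀ i < n, s i = t i)
    (hs : IsFreePrefix w n s) : IsFreePrefix w n t := fun a ha => by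
  obtain ⟨k, hk, heq, hlt⟩ := hs a ha
  exact ⟨k, hk, fun i hi => h (a + i) (by lia) ▸ heq i hi, h (a + k) hk ▸ hlt⟩

theorem isFreePrefix_splice {w s t : Seq3} {m n : ℕ} (hs : IsFreePrefix w m s)
    (ht : IsFreePrefix w n t) : IsFreePrefix w (m + n) (splice m s t) := fun a ha => by
  rcases lt_or_ge a m with ham | ham
  · obtain ⟨k, hk, heq, hlt⟩ :=
      isFreePrefix_congr (fun i hi => (splice_apply_of_lt hi s t).symm) hs a ham
    exact ⟨k, by lia, heq, hlt⟩
  · obtain ⟨b, rfl⟩ := Nat.exists_eq_add_of_le ham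
    obtain ⟨k, hk, heq, hlt⟩ := ht b (by lia)
    refine ⟨k, by lia, fun i hi => ?_, ?_⟩
    · rw [add_assoc, splice_apply_add, heq i hi]
    · rwa [add_assoc, splice_apply_add]

theorem isFreePrefix_splice_of_lt {w s : Seq3} (hs : s ∈ BetaShift w) {n : ℕ} {d : Fin 3}
    (hd : d < s n) : IsFreePrefix w (n + 1) (splice n s fun _ => d) := fun a ha => by
  obtain ⟨k, rfl⟩ := Nat.exists_eq_add_of_le (Nat.le_of_lt_succ ha)
  have hbefore : ∀ i < k, splice (a + k) s (fun _ => d) (a + i) = s (a + i) :=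
    fun i hi => splice_apply_of_lt (by lia) _ _
  by_cases hmatch : ∀ i < k, s (a + i) = w i
  · refine ⟨k, by lia, fun i hi => (hbefore i hi).trans (hmatch i hi), ?_⟩
    have hlast : splice (a + k) s (fun _ => d) (a + k) = d := splice_apply_add _ 0 _ _
    rw [hlast]
    exact hd.trans_le (apply_add_le_of_mem_betaShift hs hmatch)
  · push Not at hmatch
    classical
    obtain ⟨hjk, hne⟩ := Nat.find_spec hmatch
    have heq : ∀ i < Nat.find hmatch, s (a + i) = w i := fun i hi =>
      not_not.mp fun h => Nat.find_min hmatch hi ⟨by lia, h⟩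
    exact ⟨_, by lia, fun i hi => (hbefore i (by lia)).trans (heq i hi),
      hbefore _ hjk ▸ (apply_add_le_of_mem_betaShift hs heq).lt_of_ne hne⟩

theorem mem_betaShift_of_forall_exists_isFreePrefix {w s : Seq3}
    (h : ∀ r, ∃ a n, a ≤ r ∧ r < a + n ∧ IsFreePrefix w n (shift^[a] s)) :
    s ∈ BetaShift w := by
  intro r
  obtain ⟨a, n, har, hrn, hfree⟩ := h r
  obtain ⟨b, rfl⟩ := Nat.exists_eq_add_of_le har
  obtain ⟨k, -, heq, hlt⟩ := hfree b (by lia)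
  simp only [iterate_shift_apply, ← add_assoc] at heq hlt
  exact Or.inr ⟨k, fun i hi => by rw [iterate_shift_apply, heq i hi],
    by rwa [iterate_shift_apply]⟩

theorem prefixFreq_mem_DF_of_isFreePrefix {w s : Seq3} {n : ℕ} (hs : IsFreePrefix w n s)
    (hn : 0 < n) : prefixFreq s n ∈ DF w := by
  set u : Seq3 := fun i => s (i % n) with hu
  have hshift (q : ℕ) : shift^[n * q] u = u := by
    ext i
    simp [hu, iterate_shift_apply]
  have hprefix : ∀ i < n, s i = u i := fun i hi => by simp only [hu, Nat.mod_eq_of_lt hi]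
  have hperiodic : Function.IsPeriodicPt shift n u := mul_one n ▸ hshift 1
  have hfreq : prefixFreq s n = prefixFreq u n := by
    rw [prefixFreq, prefixFreq, birk_congr hprefix]
  have hmem : u ∈ BetaShift w := mem_betaShift_of_forall_exists_isFreePrefix fun r =>
    ⟨n * (r / n), n, Nat.mul_div_le r n, Nat.lt_mul_div_succ r hn,
      (hshift (r / n)).symm ▸ isFreePrefix_congr hprefix hs⟩
  exact ⟨u, hmem, hfreq ▸ hasFreq_of_isPeriodicPt hperiodic hn⟩

/-! ### Convexity of the digit frequency set -/

/-- The limits of digit frequencies of free words whose lengths run through all of `ℕ`. -/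
def freeFreq (w : Seq3) : Set (Fin 3 → ℝ) :=
  {v | ∃ t : ℕ → Seq3, (∀ n, IsFreePrefix w n (t n)) ∧
    Tendsto (fun n => prefixFreq (t n) n) atTop (𝓝 v)}

theorem convex_freeFreq (w : Seq3) : Convex ℝ (freeFreq w) := by
  rw [convex_iff_forall_pos]
  rintro v ⟨t, ht, htv⟩ v' ⟨t', ht', htv'⟩ a b ha hb hab
  have hle (n : ℕ) := natFloor_mul_add_natFloor_mul_le ha.le hb.le hab.le n
  have hfloor_le (n : ℕ) : ⌊a * n⌋₊ ≤ n := (Nat.le_add_right _ _).trans (hle n)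
  have hadd (n : ℕ) : ⌊a * n⌋₊ + (n - ⌊a * n⌋₊) = n := Nat.add_sub_cancel' (hfloor_le n)
  refine ⟨fun n => splice ⌊a * n⌋₊ (t ⌊a * n⌋₊) (t' (n - ⌊a * n⌋₊)),
    fun n => ?_, ?_⟩
  · simpa only [hadd] using isFreePrefix_splice (ht ⌊a * n⌋₊) (ht' (n - ⌊a * n⌋₊))
  have hleft : Tendsto (fun n : ℕ => ⌊a * n⌋₊) atTop atTop := tendsto_nat_floor_mul_atTop a ha
  have hright : Tendsto (fun n : ℕ => n - ⌊a * n⌋₊) atTop atTop :=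
    tendsto_atTop_mono (fun n => Nat.le_sub_of_add_le' (hle n)) (tendsto_nat_floor_mul_atTop b hb)
  have hleft_div : Tendsto (fun n : ℕ => (⌊a * n⌋₊ : ℝ) / n) atTop (𝓝 a) :=
    (tendsto_nat_floor_mul_div_atTop ha.le).comp tendsto_natCast_atTop_atTop
  have hright_div : Tendsto (fun n : ℕ => ((n - ⌊a * n⌋₊ : ℕ) : ℝ) / n) atTop (𝓝 b) := by
    refine (eq_sub_of_add_eq' hab ▸ hleft_div.const_sub 1).congr' ?_
    filter_upwards [eventually_ne_atTop 0] with n hn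
    rw [Nat.cast_sub (hfloor_le n), sub_div, div_self (Nat.cast_ne_zero.mpr hn)]
  refine ((hleft_div.smul (htv.comp hleft)).add (hright_div.smul (htv'.comp hright))).congr
    fun n => ?_
  have hsplice := prefixFreq_splice (t ⌊a * n⌋₊) (t' (n - ⌊a * n⌋₊)) ⌊a * n⌋₊ (n - ⌊a * n⌋₊)
  rw [hadd n] at hsplice
  exact hsplice.symm

/-- Lowering the last nonzero digit of the word to `0` makes it free. -/
theorem exists_isFreePrefix_norm_birk_sub_le {w s : Seq3} (hw : 0 < w 0) (hs : s ∈ BetaShift w)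
    (n : ℕ) : ∃ t, IsFreePrefix w n t ∧ ‖birk t n - birk s n‖ ≤ 2 := by
  induction n with
  | zero => exact ⟨s, fun a ha => absurd ha a.not_lt_zero, by simp⟩
  | succ n ih =>
    have hbirk_splice (t : Seq3) :
        birk (splice n t fun _ => 0) (n + 1) = birk t n + Pi.single 0 1 := by
      rw [birk_splice, birk_succ _ 0]
      simp [birk]
    rcases eq_or_ne (s n) 0 with hzero | hpos
    · obtain ⟨t, ht, hnorm⟩ := ih
      refine ⟨splice n t fun _ => 0, isFreePrefix_splice ht fun a ha => ⟨0, ha, by simp, hw⟩, ?_⟩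
      rwa [hbirk_splice, birk_succ, hzero, add_sub_add_right_eq_sub]
    · refine ⟨_, isFreePrefix_splice_of_lt hs (Fin.pos_iff_ne_zero.mpr hpos), ?_⟩
      rw [hbirk_splice, birk_succ, add_sub_add_left_eq_sub]
      exact (norm_sub_le _ _).trans (by simp only [Pi.norm_single, norm_one]; norm_num)

theorem DF_subset_freeFreq {w : Seq3} (hw : 0 < w 0) : DF w ⊆ freeFreq w := by
  rintro v ⟨s, hs, hv⟩
  choose t ht hnorm using exists_isFreePrefix_norm_birk_sub_le hw hs
  refine ⟨t, ht, ?_⟩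
  have hdiff : Tendsto (fun n : ℕ => (n : ℝ)⁻¹ • (birk (t n) n - birk s n)) atTop (𝓝 0) :=
    tendsto_inv_atTop_nhds_zero_nat.zero_smul_isBoundedUnder_le
      (isBoundedUnder_of ⟨2, fun n => hnorm n⟩)
  simpa [prefixFreq, ← smul_add] using hdiff.add hv

/-- The concatenation of the words `(x j)₀ ⋯ (x j)_{2j}` for `j = 0, 1, 2, …`. As these have the
odd lengths `2j + 1`, the `j`-th one starts at position `j²`. -/
def blockJoin (x : ℕ → Seq3) : Seq3 := fun r => x r.sqrt (r - r.sqrt ^ 2)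

theorem iterate_shift_sq_blockJoin_apply (x : ℕ → Seq3) {j i : ℕ} (hi : i < 2 * j + 1) :
    shift^[j ^ 2] (blockJoin x) i = x j i := by
  rw [iterate_shift_apply, blockJoin, Nat.sqrt_add_eq' j (by lia), Nat.add_sub_cancel_left]

theorem blockJoin_mem_betaShift {w : Seq3} {x : ℕ → Seq3}
    (hx : ∀ j, IsFreePrefix w (2 * j + 1) (x j)) : blockJoin x ∈ BetaShift w :=
  mem_betaShift_of_forall_exists_isFreePrefix fun r =>
    ⟨r.sqrt ^ 2, 2 * r.sqrt + 1, r.sqrt_le', by have := r.sqrt_le_add; lia,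
      isFreePrefix_congr (fun _ hi => (iterate_shift_sq_blockJoin_apply x hi).symm) (hx _)⟩

theorem birk_blockJoin_sq (x : ℕ → Seq3) (j : ℕ) :
    birk (blockJoin x) (j ^ 2) = ∑ i ∈ Finset.range j, birk (x i) (2 * i + 1) := by
  induction j with
  | zero => simp [birk]
  | succ j ih =>
    rw [Finset.sum_range_succ, ← ih, show (j + 1) ^ 2 = j ^ 2 + (2 * j + 1) by ring, birk_add,
      birk_congr fun i hi => iterate_shift_sq_blockJoin_apply x hi]

theorem hasFreq_blockJoin {x : ℕ → Seq3} {v : Fin 3 → ℝ}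
    (hx : (fun j : ℕ => birk (x j) (2 * j + 1) - ((2 * j + 1 : ℕ) : ℝ) • v) =o[atTop]
      (fun j : ℕ => ((2 * j + 1 : ℕ) : ℝ))) : hasFreq (blockJoin x) v := by
  have hsum (j : ℕ) : ∑ i ∈ Finset.range j, ((2 * i + 1 : ℕ) : ℝ) = (j : ℝ) ^ 2 := by
    induction j with
    | zero => simp
    | succ j ih => rw [Finset.sum_range_succ, ih]; push_cast; ring
  have hsq : (fun j : ℕ => birk (blockJoin x) (j ^ 2) - ((j ^ 2 : ℕ) : ℝ) • v) =o[atTop]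
      (fun j : ℕ => (j : ℝ) ^ 2) := by
    have htop : Tendsto (fun j : ℕ => (j : ℝ) ^ 2) atTop atTop :=
      (tendsto_pow_atTop two_ne_zero).comp tendsto_natCast_atTop_atTop
    have := hx.sum_range (fun _ => Nat.cast_nonneg _) (by simpa only [hsum] using htop)
    simpa only [Finset.sum_sub_distrib, ← Finset.sum_smul, hsum, birk_blockJoin_sq,
      Nat.cast_pow] using this
  refine tendsto_inv_smul_iff_isLittleO.mpr
    (isLittleO_of_isLittleO_sq (C := 1 + ‖v‖) (fun n => ?_) hsq)
  have hstep : birk (blockJoin x) n - (n : ℝ) • v -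
      (birk (blockJoin x) (n + 1) - ((n + 1 : ℕ) : ℝ) • v) =
        v - Pi.single (blockJoin x n) 1 := by
    rw [birk_succ, Nat.cast_succ, add_smul, one_smul]
    abel
  rw [dist_eq_norm, hstep]
  exact (norm_sub_le _ _).trans (by rw [Pi.norm_single, norm_one, add_comm])

theorem freeFreq_subset_DF (w : Seq3) : freeFreq w ⊆ DF w := by
  rintro v ⟨t, ht, htv⟩
  have hodd : Tendsto (fun j : ℕ => 2 * j + 1) atTop atTop :=
    tendsto_atTop_mono (fun j => show j ≤ 2 * j + 1 by lia) tendsto_id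
  exact ⟨blockJoin fun j => t (2 * j + 1), blockJoin_mem_betaShift fun j => ht _,
    hasFreq_blockJoin ((tendsto_inv_smul_iff_isLittleO.mp htv).comp_tendsto hodd)⟩

theorem DF_subsingleton_of_apply_zero_eq_zero {w : Seq3} (hw : w 0 = 0) :
    (DF w).Subsingleton := by
  rintro v ⟨s, hs, hv⟩ v' ⟨s', hs', hv'⟩
  have hzero {t : Seq3} (ht : t ∈ BetaShift w) : t = 0 := by
    ext r
    have := apply_add_le_of_mem_betaShift ht (a := r) (k := 0) (by simp)
    simpa [hw] using this
  rw [hzero hs] at hv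
  rw [hzero hs'] at hv'
  exact tendsto_nhds_unique hv hv'

theorem convex_DF (w : Seq3) : Convex ℝ (DF w) := by
  rcases eq_or_ne (w 0) 0 with hw | hw
  · exact (DF_subsingleton_of_apply_zero_eq_zero hw).convex
  · rw [(DF_subset_freeFreq (Fin.pos_iff_ne_zero.mpr hw)).antisymm (freeFreq_subset_DF w)]
    exact convex_freeFreq w

/-! ### Prefix sums along admissible sequences -/

section PrefixSums

variable {M : Type*} [AddCommMonoid M]

theorem sum_range_succ_splice (φ : Fin 3 → M) (s : Seq3) (n : ℕ) (d : Fin 3) :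
    ∑ i ∈ Finset.range (n + 1), φ (splice n s (fun _ => d) i) =
      ∑ i ∈ Finset.range n, φ (s i) + φ d := by
  have hlast : splice n s (fun _ => d) n = d := splice_apply_add n 0 _ _
  rw [Finset.sum_range_succ, hlast]
  congr 1
  exact Finset.sum_congr rfl fun i hi => by rw [splice_apply_of_lt (Finset.mem_range.mp hi)]

theorem sum_range_add_period {u : ℕ → M} {m p : ℕ} (hper : ∀ r, m ≤ r → u (r + p) = u r) {k : ℕ}
    (hk : m ≤ k) : ∑ i ∈ Finset.range (k + p), u i =
      ∑ i ∈ Finset.range k, u i + ∑ i ∈ Finset.range p, u (m + i) := by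
  induction k, hk using Nat.le_induction with
  | base => rw [Finset.sum_range_add]
  | succ k hk ih =>
    rw [add_right_comm, Finset.sum_range_succ, Finset.sum_range_succ, ih, hper k hk,
      add_right_comm]

variable [PartialOrder M] [IsOrderedAddMonoid M] {φ : Fin 3 → M}

/-- The prefix of `s` is cut into words `w₀ ⋯ w_{k-1} d` with `d < w_k`, each of nonpositive
weight, and one last incomplete prefix of `w`. -/
theorem exists_sum_le_of_mem_betaShift {w s : Seq3} (hs : s ∈ BetaShift w)
    (hφ : ∀ k, ∀ d < w k, ∑ i ∈ Finset.range k, φ (w i) + φ d ≤ 0) (r : ℕ) :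
    ∃ a k, r = a + k ∧ (∀ i < k, s (a + i) = w i) ∧
      ∑ i ∈ Finset.range r, φ (s i) ≤ ∑ i ∈ Finset.range k, φ (w i) := by
  induction r with
  | zero => exact ⟨0, 0, by simp⟩
  | succ r ih =>
    obtain ⟨a, k, rfl, hmatch, hle⟩ := ih
    have hstep : ∑ i ∈ Finset.range (a + k + 1), φ (s i) ≤
        ∑ i ∈ Finset.range k, φ (w i) + φ (s (a + k)) := by
      rw [Finset.sum_range_succ]
      gcongr
    rcases (apply_add_le_of_mem_betaShift hs hmatch).lt_or_eq with hlt | heq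
    · exact ⟨a + k + 1, 0, by simp, by simp, by simpa using hstep.trans (hφ k _ hlt)⟩
    · refine ⟨a, k + 1, rfl, Nat.forall_lt_succ_right.mpr ⟨hmatch, heq⟩, ?_⟩
      rwa [Finset.sum_range_succ _ k, ← heq]

variable {w : Seq3} {m p : ℕ}

theorem exists_lt_sum_range_le (hp : 0 < p) (hper : ∀ r, m ≤ r → w (r + p) = w r)
    (hφ : ∑ i ∈ Finset.range p, φ (w (m + i)) ≤ 0) (k : ℕ) :
    ∃ k' < m + p, w k' = w k ∧
      ∑ i ∈ Finset.range k, φ (w i) ≤ ∑ i ∈ Finset.range k', φ (w i) := by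
  induction k using Nat.strong_induction_on with
  | _ k ih =>
    rcases lt_or_ge k (m + p) with hk | hk
    · exact ⟨k, hk, rfl, le_rfl⟩
    · obtain ⟨j, rfl⟩ := Nat.exists_eq_add_of_le' (le_of_add_le_right hk)
      have hj : m ≤ j := by lia
      obtain ⟨k', hk', hdigit, hle⟩ := ih j (by lia)
      refine ⟨k', hk', hdigit.trans (hper j hj).symm, le_trans ?_ hle⟩
      rw [sum_range_add_period (fun r hr => congrArg φ (hper r hr)) hj]
      exact add_le_of_nonpos_right hφ

theorem exists_lt_sum_le_of_mem_betaShift (hp : 0 < p) (hper : ∀ r, m ≤ r → w (r + p) = w r)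
    (hperiod : ∑ i ∈ Finset.range p, φ (w (m + i)) ≤ 0)
    (hblock : ∀ k < m + p, ∀ d < w k, ∑ i ∈ Finset.range k, φ (w i) + φ d ≤ 0)
    {s : Seq3} (hs : s ∈ BetaShift w) (r : ℕ) :
    ∃ k < m + p, ∑ i ∈ Finset.range r, φ (s i) ≤ ∑ i ∈ Finset.range k, φ (w i) := by
  have hblock_all (k : ℕ) (d : Fin 3) (hd : d < w k) :
      ∑ i ∈ Finset.range k, φ (w i) + φ d ≤ 0 := by
    obtain ⟨k', hk', hdigit, hle⟩ := exists_lt_sum_range_le hp hper hperiod k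
    exact (add_le_add_left hle (φ d)).trans (hblock k' hk' d (hdigit ▸ hd))
  obtain ⟨-, k, -, -, hle⟩ := exists_sum_le_of_mem_betaShift hs hblock_all r
  obtain ⟨k', hk', -, hle'⟩ := exists_lt_sum_range_le hp hper hperiod k
  exact ⟨k', hk', hle.trans hle'⟩

end PrefixSums

/-! ### The vertices -/

/-- A finite set containing all vertices of `DF w` when `w_{r+p} = w_r` for `r ≥ m`: the frequency
vectors of the period `w_m ⋯ w_{m+p-1}` and of the words `w₀ ⋯ w_{k-1} d` with `d < w_k` and
`k < m + p`. -/
noncomputable def freqVertices (w : Seq3) (m p : ℕ) : Finset (Fin 3 → ℝ) :=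
  insert (prefixFreq (shift^[m] w) p)
    (((Finset.range (m + p)).sigma fun k => Finset.Iio (w k)).image fun x =>
      prefixFreq (splice x.1 w fun _ => x.2) (x.1 + 1))

theorem mem_freqVertices {w : Seq3} {m p : ℕ} {v : Fin 3 → ℝ} :
    v ∈ freqVertices w m p ↔ v = prefixFreq (shift^[m] w) p ∨
      ∃ k < m + p, ∃ d < w k, v = prefixFreq (splice k w fun _ => d) (k + 1) := by
  simp [freqVertices, and_assoc, eq_comm]

theorem isRat_of_mem_freqVertices {w : Seq3} {m p : ℕ} {v : Fin 3 → ℝ}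
    (hv : v ∈ freqVertices w m p) : IsRat v := by
  rcases mem_freqVertices.mp hv with rfl | ⟨k, -, d, -, rfl⟩ <;> exact isRat_prefixFreq _ _

theorem freqVertices_subset_DF {w : Seq3} (hw : w ∈ BetaShift w) {m p : ℕ} (hp : 0 < p)
    (hper : ∀ r, m ≤ r → w (r + p) = w r) : (freqVertices w m p : Set (Fin 3 → ℝ)) ⊆ DF w := by
  intro v hv
  rcases mem_freqVertices.mp hv with rfl | ⟨k, -, d, hd, rfl⟩
  · have hperiodic : Function.IsPeriodicPt shift p (shift^[m] w) := by
      ext i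
      simp only [iterate_shift_apply]
      rw [add_left_comm, add_comm p, hper _ (Nat.le_add_right m i)]
    exact ⟨_, iterate_shift_mem_betaShift hw m, hasFreq_of_isPeriodicPt hperiodic hp⟩
  · exact prefixFreq_mem_DF_of_isFreePrefix (isFreePrefix_splice_of_lt hw hd) k.succ_pos

theorem sum_map_single_sub_eq (f : (Fin 3 → ℝ) →ₗ[ℝ] ℝ) (c : ℝ) (s : Seq3) (n : ℕ) :
    ∑ i ∈ Finset.range n, (f (Pi.single (s i) 1) - c) = n * (f (prefixFreq s n) - c) := by
  rw [mul_sub, ← smul_eq_mul, ← map_smul, natCast_smul_prefixFreq, birk_eq_sum_single, map_sum,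
    Finset.sum_sub_distrib]
  simp

theorem le_of_mem_DF_of_forall_freqVertices_le {w : Seq3} {m p : ℕ} (hp : 0 < p)
    (hper : ∀ r, m ≤ r → w (r + p) = w r) (f : (Fin 3 → ℝ) →L[ℝ] ℝ) {c : ℝ}
    (hf : ∀ x ∈ freqVertices w m p, f x ≤ c) {v : Fin 3 → ℝ} (hv : v ∈ DF w) : f v ≤ c := by
  obtain ⟨s, hs, hfreq⟩ := hv
  set φ : Fin 3 → ℝ := fun d => f (Pi.single d 1) - c
  have hsum (t : Seq3) (n : ℕ) :
      ∑ i ∈ Finset.range n, φ (t i) = n * (f (prefixFreq t n) - c) :=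
    sum_map_single_sub_eq f c t n
  have hvertex {t : Seq3} {n : ℕ} (ht : prefixFreq t n ∈ freqVertices w m p) :
      ∑ i ∈ Finset.range n, φ (t i) ≤ 0 :=
    hsum t n ▸ mul_nonpos_of_nonneg_of_nonpos n.cast_nonneg (sub_nonpos.mpr (hf _ ht))
  have hperiod : ∑ i ∈ Finset.range p, φ (w (m + i)) ≤ 0 := by
    simpa only [iterate_shift_apply] using hvertex (mem_freqVertices.mpr (Or.inl rfl))
  have hblock (k : ℕ) (hk : k < m + p) (d : Fin 3) (hd : d < w k) :
      ∑ i ∈ Finset.range k, φ (w i) + φ d ≤ 0 := by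
    rw [← sum_range_succ_splice]
    exact hvertex (mem_freqVertices.mpr (Or.inr ⟨k, hk, d, hd, rfl⟩))
  obtain ⟨C, hC⟩ :=
    ((Finset.range (m + p)).image fun k => ∑ i ∈ Finset.range k, φ (w i)).bddAbove
  have hbound (r : ℕ) : r * (f (prefixFreq s r) - c) ≤ C := by
    obtain ⟨k, hk, hle⟩ := exists_lt_sum_le_of_mem_betaShift hp hper hperiod hblock hs r
    rw [← hsum]
    exact hle.trans (hC (Finset.mem_image_of_mem _ (Finset.mem_range.mpr hk)))
  have hlim : Tendsto (fun r => f (prefixFreq s r) - c) atTop (𝓝 (f v - c)) :=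
    ((f.continuous.tendsto v).comp hfreq).sub_const c
  exact sub_nonpos.mp (nonpos_of_tendsto_of_natCast_mul_le hlim hbound)

theorem DF_subset_convexHull_freqVertices {w : Seq3} {m p : ℕ} (hp : 0 < p)
    (hper : ∀ r, m ≤ r → w (r + p) = w r) :
    DF w ⊆ convexHull ℝ (freqVertices w m p : Set (Fin 3 → ℝ)) := by
  intro v hv
  by_contra hnot
  have hclosed : IsClosed (convexHull ℝ (freqVertices w m p : Set (Fin 3 → ℝ))) :=
    ((freqVertices w m p).finite_toSet.isCompact_convexHull (𝕜 := ℝ)).isClosed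
  obtain ⟨f, c, hhull, hc⟩ :=
    geometric_hahn_banach_closed_point (convex_convexHull ℝ _) hclosed hnot
  exact hc.not_ge (le_of_mem_DF_of_forall_freqVertices_le hp hper f
    (fun x hx => (hhull x (subset_convexHull ℝ _ hx)).le) hv)

theorem stmt9_general (w : Seq3) (hw : w ∈ BetaShift w)
    (hper : ∃ (m p : ℕ), 1 ≤ p ∧ ∀ r, m ≤ r → w (r + p) = w r) :
    ∃ F : Finset (Fin 3 → ℝ), (∀ v ∈ F, IsRat v) ∧ DF w = convexHull ℝ (F : Set (Fin 3 → ℝ)) := by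
  obtain ⟨m, p, hp, hper⟩ := hper
  exact ⟨freqVertices w m p, fun v => isRat_of_mem_freqVertices,
    (DF_subset_convexHull_freqVertices hp hper).antisymm
      (convexHull_min (freqVertices_subset_DF hw hp hper) (convex_DF w))⟩

/-- If `w ∈ Max` is eventually periodic then `DF(w)` is the convex hull
of a finite set of rational points (a polygon with rational vertices). -/
theorem stmt9 (w : Seq3) (hw : w ∈ MaxSet)
    (hper : ∃ (m p : ℕ), 1 ≤ p ∧ ∀ r, m ≤ r → w (r + p) = w r) :
    ∃ F : Finset (Fin 3 → ℝ), (∀ v ∈ F, IsRat v) ∧ DF w = convexHull ℝ (F : Set (Fin 3 → ℝ)) :=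
  stmt9_general w hw.2 hper
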